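/- Let A be a unital C*-algebra, B ⊆ A a C*-subalgebra containing the unit, and Φ : A → A a contractive linear projection onto B (i.e. Φ² = Φ, ‖Φ‖ ≤ 1, Φ(A) = B). Then Φ is a conditional expectation: Φ is positive and Φ(b₁ a b₂) = b₁ Φ(a) b₂ for all b₁, b₂ ∈ B and a ∈ A. -/

import Mathlib

/-!
The engine is a growth argument. Let `z ∈ B` be such that `x⋆z + z⋆x ≤ 0`. Then `‖x + t z‖²` is at
most `‖x‖² + t² ‖z‖²`, with no linear term in `t ≥ 0`. If `(Φ x)⋆z + z⋆(Φ x)` dominated a positive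
multiple of `z⋆z`, then `‖Φ x + t z‖² = ‖Φ (x + t z)‖²` would have a linear term, contradicting
contractivity for large `t` unless `z = 0`.

With `z = q⋆ q Φ x` this shows that `q x = 0` implies `q Φ x = 0` for `q ∈ B`. Hence the defect
`D b = Φ (b a) - b Φ a` takes the spectral layers of a positive `p ∈ B` to elements with orthogonal
ranges. Cutting `p` into `n` layers of norm at most `‖p‖ / n` gives
`‖D p‖² ≤ n (2 ‖p‖ ‖a‖ / n)²`, which tends to zero, so `Φ` is left `B`-linear; right linearity is
left linearity of `a ↦ (Φ a⋆)⋆`.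

For positivity, suppose `0 ≤ a + a⋆` but `k = Φ a + (Φ a)⋆` is not positive. A `z ∈ B` cut out of
the negative part of `k` by functional calculus makes `x = -a z` violate the growth argument.
-/

theorem eq_zero_of_forall_natCast_mul_norm_sq_le {E : Type*} [NormedAddGroup E] {x : E} {C : ℝ}
    (h : ∀ n : ℕ, n * ‖x‖ ^ 2 ≤ C) : x = 0 := by
  by_contra hx
  obtain ⟨n, hn⟩ := exists_lt_nsmul (pow_pos (norm_pos_iff.mpr hx) 2) C
  rw [nsmul_eq_mul] at hn
  exact (h n).not_gt hn

section LeftDefect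

variable {A : Type*} [NonUnitalNormedRing A] [NormedSpace ℂ A] [IsScalarTower ℂ A A]

/-- The failure of `Φ` to be left linear against a fixed element `a`, as a linear function of the
multiplier: `b ↦ Φ (b * a) - b * Φ a`. -/
def leftDefect (Φ : A →L[ℂ] A) (a : A) : A →ₗ[ℂ] A :=
  Φ ∘ₗ LinearMap.mulRight ℂ a - LinearMap.mulRight ℂ (Φ a)

theorem leftDefect_apply (Φ : A →L[ℂ] A) (a b : A) :
    leftDefect Φ a b = Φ (b * a) - b * Φ a :=
  rfl

end LeftDefect

section ContractiveProjection

variable {A : Type*} [NonUnitalNormedRing A] [StarRing A] [NormedSpace ℂ A]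
  {B : NonUnitalStarSubalgebra ℂ A} {Φ : A →L[ℂ] A}

/-- `Φ` is a contractive projection of `A` onto the subalgebra `B`: the hypothesis of Tomiyama's
theorem, with idempotence and range expressed by saying that `Φ` maps into `B` and fixes `B`. -/
structure IsContractiveProjection (Φ : A →L[ℂ] A) (B : NonUnitalStarSubalgebra ℂ A) : Prop where
  map_mem (a : A) : Φ a ∈ B
  map_eq_self {b : A} (hb : b ∈ B) : Φ b = b
  norm_map_le (a : A) : ‖Φ a‖ ≤ ‖a‖

namespace IsContractiveProjection

theorem isClosed (hΦ : IsContractiveProjection Φ B) : IsClosed (B : Set A) := by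
  have hfix : (B : Set A) = {a | Φ a = a} :=
    Set.ext fun a ↦ ⟨hΦ.map_eq_self, fun ha ↦ ha ▸ hΦ.map_mem a⟩
  rw [hfix]
  exact isClosed_eq Φ.continuous continuous_id

theorem intrinsicStar [NormedStarGroup A] [StarModule ℂ A]
    (hΦ : IsContractiveProjection Φ B) :
    IsContractiveProjection (star (WithConv.toConv Φ)).ofConv B where
  map_mem a := star_mem (hΦ.map_mem (star a))
  map_eq_self {b} hb := by
    rw [ContinuousLinearMap.intrinsicStar_apply, hΦ.map_eq_self (star_mem hb), star_star]
  norm_map_le a := by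
    rw [ContinuousLinearMap.intrinsicStar_apply, norm_star]
    exact (hΦ.norm_map_le (star a)).trans_eq (norm_star a)

theorem leftDefect_mem [IsScalarTower ℂ A A] (hΦ : IsContractiveProjection Φ B) (a : A)
    {b : A} (hb : b ∈ B) : leftDefect Φ a b ∈ B :=
  sub_mem (hΦ.map_mem _) (mul_mem hb (hΦ.map_mem a))

theorem norm_leftDefect_le [IsScalarTower ℂ A A] (hΦ : IsContractiveProjection Φ B)
    (a b : A) : ‖leftDefect Φ a b‖ ≤ 2 * ‖b‖ * ‖a‖ :=
  calc ‖leftDefect Φ a b‖ ≤ ‖Φ (b * a)‖ + ‖b * Φ a‖ := norm_sub_le _ _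
    _ ≤ ‖b‖ * ‖a‖ + ‖b‖ * ‖a‖ := by
        gcongr
        · exact (hΦ.norm_map_le _).trans (norm_mul_le b a)
        · exact (norm_mul_le b _).trans (by gcongr; exact hΦ.norm_map_le a)
    _ = 2 * ‖b‖ * ‖a‖ := by ring

end IsContractiveProjection

end ContractiveProjection

section CStarAlgebra

variable {A : Type*} [NonUnitalCStarAlgebra A] [PartialOrder A] [StarOrderedRing A]
  {B : NonUnitalStarSubalgebra ℂ A} {Φ : A →L[ℂ] A}

theorem norm_add_sq_le_of_star_mul_add_star_mul_nonpos {x y : A}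
    (h : star x * y + star y * x ≤ 0) : ‖x + y‖ ^ 2 ≤ ‖x‖ ^ 2 + ‖y‖ ^ 2 := by
  have hle : star (x + y) * (x + y) ≤ star x * x + star y * y := by
    have hexpand : star (x + y) * (x + y) =
        star x * x + star y * y + (star x * y + star y * x) := by
      rw [star_add, add_mul, mul_add, mul_add]
      abel
    rw [hexpand]
    exact add_le_of_nonpos_right h
  simp only [sq, ← CStarRing.norm_star_mul_self]
  exact (CStarAlgebra.norm_le_norm_of_nonneg_of_le (star_mul_self_nonneg _) hle).trans
    (norm_add_le _ _)

theorem mul_norm_sq_le_mul_norm_add_smul_sq {y z : A} {s t : ℝ} (hs : 0 ≤ s) (ht : 0 ≤ t)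
    (h : star z * z ≤ s • (star y * z + star z * y)) :
    (t + s * t ^ 2) * ‖z‖ ^ 2 ≤ s * ‖y + t • z‖ ^ 2 := by
  have hle : (t + s * t ^ 2) • (star z * z) ≤ s • (star (y + t • z) * (y + t • z)) :=
    calc (t + s * t ^ 2) • (star z * z)
        = t • (star z * z) + (s * t ^ 2) • (star z * z) := add_smul _ _ _
      _ ≤ s • (star y * y) +
          (t • s • (star y * z + star z * y) + (s * t ^ 2) • (star z * z)) := by
        refine le_add_of_nonneg_of_le (smul_nonneg hs (star_mul_self_nonneg y)) ?_
        gcongr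
      _ = s • (star (y + t • z) * (y + t • z)) := by
        rw [star_add, star_smul, star_trivial t, add_mul, mul_add, mul_add]
        simp only [smul_mul_assoc, mul_smul_comm]
        module
  have hnorm := CStarAlgebra.norm_le_norm_of_nonneg_of_le
    (smul_nonneg (by positivity) (star_mul_self_nonneg z)) hle
  rwa [norm_smul, norm_smul, CStarRing.norm_star_mul_self, CStarRing.norm_star_mul_self,
    Real.norm_of_nonneg (by positivity), Real.norm_of_nonneg hs, ← sq, ← sq] at hnorm

theorem exists_mem_add_eq_of_nonneg_of_norm_le [IsClosed (B : Set A)] {p : A} (hp : p ∈ B)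
    (hp0 : 0 ≤ p) {c h : ℝ} (hc : 0 ≤ c) (hh : 0 ≤ h) (hpch : ‖p‖ ≤ c + h) :
    ∃ q ∈ B, ∃ r ∈ B, q + r = p ∧ q * r = h • q ∧ 0 ≤ q ∧ ‖q‖ ≤ c ∧ ‖r‖ ≤ h := by
  have hspec : ∀ s ∈ quasispectrum ℝ p, 0 ≤ s ∧ s ≤ c + h := fun s hs ↦
    ⟨quasispectrum_nonneg_of_nonneg p hp0 s hs,
      (le_abs_self s).trans ((NonUnitalIsometricContinuousFunctionalCalculus.norm_quasispectrum_le
        p hs hp0.isSelfAdjoint).trans hpch)⟩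
  -- The functional calculus below needs both functions to vanish at `0`.
  have _ : max (0 - h) 0 = 0 := max_eq_right (by linarith)
  have _ : min 0 h = 0 := min_eq_left hh
  refine ⟨cfcₙ (fun s : ℝ ↦ max (s - h) 0) p, cfcₙ_mem (𝕜' := ℂ) _ hp,
    cfcₙ (fun s : ℝ ↦ min s h) p, cfcₙ_mem (𝕜' := ℂ) _ hp, ?_, ?_,
    cfcₙ_nonneg fun s _ ↦ le_max_right _ _, norm_cfcₙ_le fun s hs ↦ ?_,
    norm_cfcₙ_le fun s hs ↦ ?_⟩
  · rw [← cfcₙ_add ..]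
    conv_rhs => rw [← cfcₙ_id' ℝ p]
    refine cfcₙ_congr fun s _ ↦ ?_
    rcases le_total s h with hs | hs <;> simp [hs]
  · rw [← cfcₙ_mul .., ← cfcₙ_smul ..]
    refine cfcₙ_congr fun s _ ↦ ?_
    rcases le_total s h with hs | hs <;> simp [hs, mul_comm]
  · rw [Real.norm_of_nonneg (le_max_right _ _)]
    exact max_le (by linarith [(hspec s hs).2]) hc
  · rw [Real.norm_of_nonneg (le_min (hspec s hs).1 hh)]
    exact min_le_right _ _

theorem exists_mem_ne_zero_of_not_nonneg [IsClosed (B : Set A)] {k : A} (hk : k ∈ B)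
    (hsa : IsSelfAdjoint k) (hneg : ¬ 0 ≤ k) :
    ∃ z ∈ B, z ≠ 0 ∧ ∃ s : ℝ, 0 ≤ s ∧ star z * z ≤ s • -(star z * k * z) := by
  rw [StarOrderedRing.nonneg_iff_quasispectrum_nonneg (R := ℝ) k] at hneg
  push Not at hneg
  obtain ⟨l, hl, hl0⟩ := hneg
  set f : ℝ → ℝ := fun s ↦ max (l / 2 - s) 0 with hf
  have hf0 : f 0 = 0 := max_eq_right (by linarith)
  have hfc : ContinuousOn f (quasispectrum ℝ k) := by fun_prop
  have hfl : 0 < f l := lt_max_of_lt_left (by linarith)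
  have hzsa : star (cfcₙ f k) = cfcₙ f k := (cfcₙ_predicate f k).star_eq
  refine ⟨cfcₙ f k, cfcₙ_mem (𝕜' := ℂ) f hk, fun hz ↦ ?_, -2 / l, ?_, ?_⟩
  · have := norm_apply_le_norm_cfcₙ f k hl
    rw [hz, norm_zero, Real.norm_of_nonneg hfl.le] at this
    exact this.not_gt hfl
  · exact div_nonneg_of_nonpos (by norm_num) hl0.le
  · rw [hzsa]
    have hmul : cfcₙ f k * k * cfcₙ f k = cfcₙ (fun s ↦ f s * s * f s) k := by
      rw [cfcₙ_mul .., cfcₙ_mul .., cfcₙ_id' ..]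
    rw [hmul, ← cfcₙ_mul .., ← cfcₙ_neg .., ← cfcₙ_smul ..]
    refine cfcₙ_mono fun x _ ↦ ?_
    rcases le_total (l / 2) x with hx | hx
    · simp [hf, hx]
    · have hscale : 1 ≤ -2 / l * -x := by
        rw [div_mul_eq_mul_div, le_div_iff_of_neg hl0]
        linarith
      calc f x * f x ≤ f x * f x * (-2 / l * -x) :=
            le_mul_of_one_le_right (mul_self_nonneg _) hscale
        _ = (-2 / l) • -(f x * x * f x) := by
            rw [smul_eq_mul]
            ring

namespace IsContractiveProjection

theorem eq_zero_of_star_mul_self_le (hΦ : IsContractiveProjection Φ B) {x z : A} (hz : z ∈ B)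
    (hx : star x * z + star z * x ≤ 0) {s : ℝ} (hs : 0 ≤ s)
    (hΦx : star z * z ≤ s • (star (Φ x) * z + star z * Φ x)) : z = 0 := by
  refine eq_zero_of_forall_natCast_mul_norm_sq_le (C := s * ‖x‖ ^ 2) fun n ↦ ?_
  have hmap : Φ (x + (n : ℝ) • z) = Φ x + (n : ℝ) • z := by
    rw [map_add, Φ.map_smul_of_tower, hΦ.map_eq_self hz]
  have hupper : ‖Φ x + (n : ℝ) • z‖ ^ 2 ≤ ‖x‖ ^ 2 + n ^ 2 * ‖z‖ ^ 2 := by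
    have hcross : star x * ((n : ℝ) • z) + star ((n : ℝ) • z) * x ≤ 0 := by
      rw [star_smul, star_trivial (n : ℝ), mul_smul_comm, smul_mul_assoc, ← smul_add]
      exact smul_nonpos_of_nonneg_of_nonpos n.cast_nonneg hx
    calc ‖Φ x + (n : ℝ) • z‖ ^ 2 ≤ ‖x + (n : ℝ) • z‖ ^ 2 := by
          rw [← hmap]
          gcongr
          exact hΦ.norm_map_le _
      _ ≤ ‖x‖ ^ 2 + ‖(n : ℝ) • z‖ ^ 2 := norm_add_sq_le_of_star_mul_add_star_mul_nonpos hcross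
      _ = ‖x‖ ^ 2 + n ^ 2 * ‖z‖ ^ 2 := by rw [norm_smul, Real.norm_natCast, mul_pow]
  have hlower := mul_norm_sq_le_mul_norm_add_smul_sq hs n.cast_nonneg hΦx
  linarith [mul_le_mul_of_nonneg_left hupper hs]

theorem mul_map_eq_zero (hΦ : IsContractiveProjection Φ B) {q x : A} (hq : q ∈ B)
    (hqx : q * x = 0) : q * Φ x = 0 := by
  set y := q * Φ x with hy
  have hΦxz : star (Φ x) * (star q * y) = star y * y := by
    rw [hy, star_mul, mul_assoc]
  have hxz : star x * (star q * y) = 0 := by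
    rw [← mul_assoc, ← star_mul, hqx, star_zero, zero_mul]
  have hzx : star (star q * y) * x = 0 := by
    rw [star_mul, star_star, mul_assoc, hqx, mul_zero]
  have hzΦx : star (star q * y) * Φ x = star y * y := by
    rw [star_mul, star_star, mul_assoc]
  have hle : star (star q * y) * (star q * y) ≤ ‖q * star q‖ • (star y * y) := by
    have hassoc : star (star q * y) * (star q * y) = star y * (q * star q) * y := by
      simp only [star_mul, star_star, mul_assoc]
    rw [hassoc]
    exact CStarAlgebra.star_left_conjugate_le_norm_smul (.mul_star_self q)
  have hz : star q * y = 0 := by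
    refine hΦ.eq_zero_of_star_mul_self_le (x := x) (s := ‖q * star q‖)
      (mul_mem (star_mem hq) (mul_mem hq (hΦ.map_mem x))) (by rw [hxz, hzx, add_zero])
      (norm_nonneg _) (hle.trans ?_)
    rw [hΦxz, hzΦx]
    gcongr
    exact le_add_of_nonneg_left (star_mul_self_nonneg y)
  rw [← CStarRing.star_mul_self_eq_zero_iff, ← hΦxz, hz, mul_zero]

theorem star_leftDefect_mul_leftDefect_eq_zero (hΦ : IsContractiveProjection Φ B) (a : A)
    {q r : A} (hq : q ∈ B) (hr : r ∈ B) (hqsa : IsSelfAdjoint q) {c : ℝ} (hqr : q * r = c • q) :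
    star (leftDefect Φ a r) * leftDefect Φ a q = 0 := by
  have hmap : q * Φ (r * a) = c • (q * Φ a) := by
    have hzero : q * (r * a - c • a) = 0 := by
      rw [mul_sub, ← mul_assoc, hqr, smul_mul_assoc, mul_smul_comm, sub_self]
    have := hΦ.mul_map_eq_zero hq hzero
    rwa [map_sub, Φ.map_smul_of_tower, mul_sub, mul_smul_comm, sub_eq_zero] at this
  have hqD : q * leftDefect Φ a r = 0 := by
    rw [leftDefect_apply, mul_sub, hmap, ← mul_assoc, hqr, smul_mul_assoc, sub_self]
  have hDq : star (leftDefect Φ a r) * q = 0 := by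
    rw [← hqsa.star_eq, ← star_mul, hqD, star_zero]
  have hDΦ : star (leftDefect Φ a r) * Φ (q * a) = 0 :=
    hΦ.mul_map_eq_zero (star_mem (hΦ.leftDefect_mem a hr)) (by rw [← mul_assoc, hDq, zero_mul])
  rw [leftDefect_apply Φ a q, mul_sub, hDΦ, ← mul_assoc, hDq, zero_mul, sub_zero]

theorem norm_leftDefect_sq_le (hΦ : IsContractiveProjection Φ B) (a : A) {h : ℝ} (hh : 0 ≤ h)
    (n : ℕ) {p : A} (hp : p ∈ B) (hp0 : 0 ≤ p) (hpn : ‖p‖ ≤ n * h) :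
    ‖leftDefect Φ a p‖ ^ 2 ≤ n * (2 * h * ‖a‖) ^ 2 := by
  induction n generalizing p with
  | zero =>
    have hpzero : p = 0 := by simpa using hpn
    simp [hpzero]
  | succ n ih =>
    have := hΦ.isClosed
    obtain ⟨q, hq, r, hr, rfl, hqr, hq0, hqn, hrh⟩ :=
      exists_mem_add_eq_of_nonneg_of_norm_le hp hp0 (c := n * h) (by positivity) hh
        (by push_cast at hpn; linarith)
    have horth := hΦ.star_leftDefect_mul_leftDefect_eq_zero a hq hr hq0.isSelfAdjoint hqr
    have horth' : star (leftDefect Φ a q) * leftDefect Φ a r = 0 := by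
      rw [← star_star (leftDefect Φ a r), ← star_mul, horth, star_zero]
    calc ‖leftDefect Φ a (q + r)‖ ^ 2
        ≤ ‖leftDefect Φ a q‖ ^ 2 + ‖leftDefect Φ a r‖ ^ 2 := by
          rw [map_add]
          exact norm_add_sq_le_of_star_mul_add_star_mul_nonpos (by rw [horth, horth', add_zero])
      _ ≤ n * (2 * h * ‖a‖) ^ 2 + (2 * h * ‖a‖) ^ 2 := by
          gcongr
          · exact ih hq hq0 hqn
          · exact (hΦ.norm_leftDefect_le a r).trans (by gcongr)
      _ = (n + 1 : ℕ) * (2 * h * ‖a‖) ^ 2 := by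
          push_cast
          ring

theorem leftDefect_eq_zero_of_nonneg (hΦ : IsContractiveProjection Φ B) (a : A) {p : A}
    (hp : p ∈ B) (hp0 : 0 ≤ p) : leftDefect Φ a p = 0 := by
  refine eq_zero_of_forall_natCast_mul_norm_sq_le (C := (2 * ‖p‖ * ‖a‖) ^ 2) fun n ↦ ?_
  rcases n.eq_zero_or_pos with rfl | hn
  · rw [Nat.cast_zero, zero_mul]
    positivity
  · have hn' : (n : ℝ) ≠ 0 := by positivity
    calc n * ‖leftDefect Φ a p‖ ^ 2 ≤ n * (n * (2 * (‖p‖ / n) * ‖a‖) ^ 2) := by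
          gcongr
          exact hΦ.norm_leftDefect_sq_le a (by positivity) n hp hp0 (mul_div_cancel₀ _ hn').ge
      _ = (2 * ‖p‖ * ‖a‖) ^ 2 := by field_simp

theorem map_mul_left (hΦ : IsContractiveProjection Φ B) {b : A} (hb : b ∈ B) (a : A) :
    Φ (b * a) = b * Φ a := by
  have := hΦ.isClosed
  have hsa : ∀ c ∈ B, IsSelfAdjoint c → leftDefect Φ a c = 0 := fun c hc hcsa ↦ by
    have hpos : c⁺ ∈ B := CFC.posPart_def c ▸ cfcₙ_mem (𝕜' := ℂ) _ hc
    have hneg : c⁻ ∈ B := CFC.negPart_def c ▸ cfcₙ_mem (𝕜' := ℂ) _ hc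
    rw [← CFC.posPart_sub_negPart c hcsa, map_sub,
      hΦ.leftDefect_eq_zero_of_nonneg a hpos (CFC.posPart_nonneg c),
      hΦ.leftDefect_eq_zero_of_nonneg a hneg (CFC.negPart_nonneg c), sub_zero]
  have hre : (realPart b : A) ∈ B := by
    rw [realPart_apply_coe, ← Complex.coe_smul]
    exact SMulMemClass.smul_mem _ (add_mem hb (star_mem hb))
  have him : (imaginaryPart b : A) ∈ B := by
    rw [imaginaryPart_apply_coe, ← Complex.coe_smul]
    exact SMulMemClass.smul_mem _ (SMulMemClass.smul_mem _ (sub_mem hb (star_mem hb)))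
  have hD : leftDefect Φ a b = 0 := by
    rw [← realPart_add_I_smul_imaginaryPart b, map_add, map_smul, hsa _ hre (realPart b).2,
      hsa _ him (imaginaryPart b).2, smul_zero, add_zero]
  rwa [leftDefect_apply, sub_eq_zero] at hD

theorem map_mul_right (hΦ : IsContractiveProjection Φ B) {b : A} (hb : b ∈ B) (a : A) :
    Φ (a * b) = Φ a * b := by
  have hstar := hΦ.intrinsicStar.map_mul_left (star_mem hb) (star a)
  rw [ContinuousLinearMap.intrinsicStar_apply, ContinuousLinearMap.intrinsicStar_apply,
    WithConv.ofConv_toConv, star_mul, star_star, star_star, ← star_mul] at hstar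
  exact star_injective hstar

theorem add_star_map_nonneg (hΦ : IsContractiveProjection Φ B) {a : A} (ha : 0 ≤ a + star a) :
    0 ≤ Φ a + star (Φ a) := by
  have := hΦ.isClosed
  by_contra hneg
  obtain ⟨z, hz, hz0, s, hs, hle⟩ := exists_mem_ne_zero_of_not_nonneg
    (add_mem (hΦ.map_mem a) (star_mem (hΦ.map_mem a))) (.add_star_self (Φ a)) hneg
  have hcross (c : A) :
      star (-(c * z)) * z + star z * -(c * z) = -(star z * (c + star c) * z) := by
    rw [star_neg, star_mul]
    noncomm_ring
  have hmap : Φ (-(a * z)) = -(Φ a * z) := by rw [map_neg, hΦ.map_mul_right hz]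
  refine hz0 (hΦ.eq_zero_of_star_mul_self_le (x := -(a * z)) hz ?_ hs ?_)
  · rw [hcross, neg_nonpos]
    exact star_left_conjugate_nonneg ha z
  · rwa [hmap, hcross]

theorem isSelfAdjoint_map (hΦ : IsContractiveProjection Φ B) {a : A} (ha : IsSelfAdjoint a) :
    IsSelfAdjoint (Φ a) := by
  have hI (c : ℂ) (hc : star c = -c) : 0 ≤ c • (Φ a - star (Φ a)) := by
    have := hΦ.add_star_map_nonneg (a := c • a)
      (by rw [star_smul, ha.star_eq, hc, neg_smul, add_neg_cancel])
    rwa [map_smul, star_smul, hc, neg_smul, ← sub_eq_add_neg, ← smul_sub] at this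
  have hzero : Complex.I • (Φ a - star (Φ a)) = 0 := by
    refine le_antisymm ?_ (hI _ Complex.conj_I)
    rw [← neg_nonneg, ← neg_smul]
    exact hI _ (by simp)
  rw [smul_eq_zero_iff_right Complex.I_ne_zero, sub_eq_zero] at hzero
  exact hzero.symm

theorem map_nonneg (hΦ : IsContractiveProjection Φ B) {a : A} (ha : 0 ≤ a) : 0 ≤ Φ a := by
  have hsa := ha.isSelfAdjoint
  have htwo : 0 ≤ Φ a + star (Φ a) :=
    hΦ.add_star_map_nonneg (hsa.star_eq.symm ▸ add_nonneg ha ha)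
  rw [(hΦ.isSelfAdjoint_map hsa).star_eq, ← two_smul ℝ] at htwo
  exact nonneg_of_smul_nonneg_of_pos_left htwo two_pos

end IsContractiveProjection

end CStarAlgebra

theorem tomiyama_contractive_projection_is_conditional_expectation_general
    {A : Type*} [NonUnitalCStarAlgebra A] [PartialOrder A] [StarOrderedRing A]
    (B : NonUnitalStarSubalgebra ℂ A)
    (Φ : A →L[ℂ] A) (hidem : Φ.comp Φ = Φ) (hnorm : ‖Φ‖ ≤ 1)
    (hrange : Set.range Φ = (B : Set A)) :
    (∀ a : A, 0 ≤ a → 0 ≤ Φ a) ∧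
      ∀ b₁ b₂ a : A, b₁ ∈ B → b₂ ∈ B → Φ (b₁ * a * b₂) = b₁ * Φ a * b₂ := by
  have hmem (a : A) : a ∈ B ↔ ∃ x, Φ x = a := (Set.ext_iff.mp hrange a).symm
  have hΦ : IsContractiveProjection Φ B :=
    { map_mem := fun a ↦ (hmem _).mpr ⟨a, rfl⟩
      map_eq_self := fun hb ↦ by
        obtain ⟨x, rfl⟩ := (hmem _).mp hb
        exact DFunLike.congr_fun hidem x
      norm_map_le := fun a ↦ by simpa only [one_mul] using Φ.le_of_opNorm_le hnorm a }
  refine ⟨fun a ↦ hΦ.map_nonneg, fun b₁ b₂ a hb₁ hb₂ ↦ ?_⟩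
  rw [hΦ.map_mul_right hb₂, hΦ.map_mul_left hb₁]

/-- **Tomiyama's theorem.** Let `A` be a unital C*-algebra, `B ⊆ A` a
C*-subalgebra containing the unit, and `Φ : A → A` a contractive linear projection onto `B`
(`Φ² = Φ`, `‖Φ‖ ≤ 1`, `Φ(A) = B`).  Then `Φ` is a conditional expectation: `Φ` is positive
and `Φ(b₁ a b₂) = b₁ Φ(a) b₂` for all `b₁, b₂ ∈ B` and `a ∈ A`. -/
theorem tomiyama_contractive_projection_is_conditional_expectation
    {A : Type*} [NormedRing A] [StarRing A] [CStarRing A] [NormedAlgebra ℂ A]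
    [StarModule ℂ A] [PartialOrder A] [StarOrderedRing A] [CompleteSpace A]
    (B : StarSubalgebra ℂ A)
    (Φ : A →L[ℂ] A) (hidem : Φ.comp Φ = Φ) (hnorm : ‖Φ‖ ≤ 1)
    (hrange : Set.range Φ = (B : Set A)) :
    (∀ a : A, 0 ≤ a → 0 ≤ Φ a) ∧
      ∀ b₁ b₂ a : A, b₁ ∈ B → b₂ ∈ B → Φ (b₁ * a * b₂) = b₁ * Φ a * b₂ := by
  let _ : CStarAlgebra A := { }
  exact tomiyama_contractive_projection_is_conditional_expectation_general
    B.toNonUnitalStarSubalgebra Φ hidem hnorm hrange
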